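/- arXiv:0902.4036 — 2 statements merged into one kernel-verified Lean document; each statement's English description precedes it below -/
import Mathlib

section
/- If a primitive P on a finite product 𝒳×𝒴 satisfies Δ_P = 0, where Δ_P is the infimum over all phase functions θ of the leakage Δ(ψ_θ), then P is trivial, i.e. H(X↘Y|Y) = 0. -/
open scoped BigOperators
open Matrix

noncomputable section

open scoped Classical in
/-- Base-2 von Neumann entropy of a matrix: minus the sum of `λ·log₂ λ` over the real
eigenvalues (with multiplicity) if the matrix is Hermitian, and `0` otherwise. -/
def vNE {n : Type*} [Fintype n] (ρ : Matrix n n ℂ) : ℝ :=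
  if h : ρ.IsHermitian then -∑ i, h.eigenvalues i * Real.logb 2 (h.eigenvalues i) else 0

/-- Shannon entropy (base 2), with the convention `0·log₂ 0 = 0`. -/
def shannon {α : Type*} [Fintype α] (p : α → ℝ) : ℝ :=
  -∑ a, p a * Real.logb 2 (p a)

/-- Marginal on the first component: `P_X`. -/
def margX {X Y : Type*} [Fintype Y] (P : X × Y → ℝ) (x : X) : ℝ := ∑ y, P (x, y)

/-- Marginal on the second component: `P_Y`. -/
def margY {X Y : Type*} [Fintype X] (P : X × Y → ℝ) (y : Y) : ℝ := ∑ x, P (x, y)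

/-- Mutual information `I(X;Y)` of a joint distribution `P` (base 2). -/
def mutualInfo {X Y : Type*} [Fintype X] [Fintype Y] (P : X × Y → ℝ) : ℝ :=
  ∑ x, ∑ y, P (x, y) * Real.logb 2 (P (x, y) / (margX P x * margY P y))

/-- The regular embedding `ψ_θ(x,y) = e^{iθ(x,y)}·√(P(x,y))`. -/
def regEmb {X Y : Type*} (P θ : X × Y → ℝ) (xy : X × Y) : ℂ :=
  Complex.exp (Complex.I * θ xy) * (Real.sqrt (P xy) : ℂ)

/-- Reduced density matrix `ρ_A(θ)` of the regular embedding `ψ_θ`. -/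
def rhoA {X Y : Type*} [Fintype Y] (P θ : X × Y → ℝ) : Matrix X X ℂ :=
  Matrix.of fun x x' => ∑ y, regEmb P θ (x, y) * star (regEmb P θ (x', y))

/-- Reduced density matrix `ρ_B(θ)` of the regular embedding `ψ_θ`. -/
def rhoB {X Y : Type*} [Fintype X] (P θ : X × Y → ℝ) : Matrix Y Y ℂ :=
  Matrix.of fun y y' => ∑ x, regEmb P θ (x, y) * star (regEmb P θ (x, y'))

/-- Leakage `Δ(ψ_θ) = S(ρ_B(θ)) − I(X;Y)` of a regular embedding. -/
def leakReg {X Y : Type*} [Fintype X] [Fintype Y] (P θ : X × Y → ℝ) : ℝ :=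
  vNE (rhoB P θ) - mutualInfo P

/-- Leakage `Δ_P` of a primitive: the infimum of the leakage over all phase functions. -/
def leakPrim {X Y : Type*} [Fintype X] [Fintype Y] (P : X × Y → ℝ) : ℝ :=
  ⨅ θ : X × Y → ℝ, leakReg P θ

/-- `f_X(x) = P_{Y|X=x}`, the conditional distribution of `Y` given `X = x`. -/
def fX {X Y : Type*} [Fintype Y] (P : X × Y → ℝ) (x : X) : Y → ℝ :=
  fun y => P (x, y) / margX P x

/-- `f_Y(y) = P_{X|Y=y}`, the conditional distribution of `X` given `Y = y`. -/
def fY {X Y : Type*} [Fintype X] (P : X × Y → ℝ) (y : Y) : X → ℝ :=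
  fun x => P (x, y) / margY P y

open scoped Classical in
/-- Shannon entropy `H(P_{f_X(X),Y})` of the joint distribution of the pair `(f_X(X), Y)`. -/
def entDepJoint {X Y : Type*} [Fintype X] [Fintype Y] (P : X × Y → ℝ) : ℝ :=
  -∑ k ∈ Finset.image (fX P) Finset.univ, ∑ y,
      (∑ x ∈ Finset.univ.filter fun x => fX P x = k, P (x, y)) *
        Real.logb 2 (∑ x ∈ Finset.univ.filter fun x => fX P x = k, P (x, y))

/-- Conditional Shannon entropy `H(X↘Y|Y) = H(P_{f_X(X),Y}) − H(P_Y)`. -/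
def condEntDep {X Y : Type*} [Fintype X] [Fintype Y] (P : X × Y → ℝ) : ℝ :=
  entDepJoint P - shannon (margY P)

/-!
For `t > 0` the trace `tr ((ρ_B + t)⁻¹ ρ_B)` is a supremum of quadratic expressions in a test
matrix. Testing with the amplitudes of `ψ_θ`, rescaled entrywise by `1 / (P_X P_Y / P + t)`, and
bounding the overlaps of rows by Cauchy–Schwarz, it is at least `∑ P / (P_X P_Y / P + t)` plus the
Cauchy–Schwarz defect, in which the phases no longer appear. Integrating over `t` turns the two
resolvent sums into `S(ρ_B)` and `I(X;Y)`, so `Δ(ψ_θ)` is at least the integrated defect, uniformly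
in `θ`, and no minimizing phase is needed. If `Δ_P = 0` the defect vanishes, and the equality case
of Cauchy–Schwarz says that rows of `P` meeting in a common column are proportional: `f_X(X)` is a
function of `Y`.
-/

theorem sum_image_apply_sum_fiber {α β M N : Type*} [Fintype α] [DecidableEq β]
    [AddCommMonoid M] [AddCommMonoid N] {f : α → β} {p : α → M} {φ : M → N} (hφ : φ 0 = 0)
    (hf : ∀ a a', p a ≠ 0 → p a' ≠ 0 → f a = f a') :
    ∑ k ∈ Finset.univ.image f, φ (∑ a with f a = k, p a) = φ (∑ a, p a) := by
  by_cases hp : ∀ a, p a = 0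
  · simp only [hp, Finset.sum_const_zero, hφ]
  obtain ⟨a₀, ha₀⟩ := not_forall.1 hp
  rw [Finset.sum_eq_single_of_mem (f a₀) (Finset.mem_image_of_mem f (Finset.mem_univ a₀))]
  · congr 1
    refine Finset.sum_filter_of_ne fun a _ ha => hf a a₀ ha ha₀
  · intro k _ hk
    rw [Finset.sum_eq_zero, hφ]
    intro a ha
    by_contra hne
    exact hk ((Finset.mem_filter.1 ha).2 ▸ hf a a₀ hne ha₀)

theorem sum_sq_mul_sum_sq_sub_sq_sum_mul {ι R : Type*} [Fintype ι] [CommRing R] (f g : ι → R) :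
    2 * ((∑ i, f i ^ 2) * ∑ i, g i ^ 2 - (∑ i, f i * g i) ^ 2) =
      ∑ i, ∑ j, (f i * g j - f j * g i) ^ 2 := by
  have hexpand : ∀ i j, (f i * g j - f j * g i) ^ 2 =
      f i ^ 2 * g j ^ 2 + g i ^ 2 * f j ^ 2 - 2 * ((f i * g i) * (f j * g j)) :=
    fun i j => by ring
  simp only [hexpand, Finset.sum_sub_distrib, Finset.sum_add_distrib, ← Finset.mul_sum,
    ← Finset.sum_mul]
  ring

section LogSum

variable {ι κ : Type*} [Fintype ι] [Fintype κ] {c v : ι → ℝ}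

theorem hasDerivAt_sum_mul_log_add (hv : ∀ i, 0 ≤ v i) {t : ℝ} (ht : 0 < t) :
    HasDerivAt (fun t => ∑ i, c i * Real.log (v i + t)) (∑ i, c i / (v i + t)) t := by
  refine HasDerivAt.fun_sum fun i _ => ?_
  have hne : v i + t ≠ 0 := (add_pos_of_nonneg_of_pos (hv i) ht).ne'
  simpa only [mul_one_div] using (((hasDerivAt_id' t).const_add (v i)).log hne).const_mul (c i)

theorem continuousOn_sum_mul_log_add (hv : ∀ i, 0 ≤ v i) (hcv : ∀ i, c i ≠ 0 → v i ≠ 0) :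
    ContinuousOn (fun t => ∑ i, c i * Real.log (v i + t)) (Set.Ici 0) := by
  refine continuousOn_finsetSum _ fun i _ => ?_
  rcases eq_or_ne (c i) 0 with hc | hc
  · simpa only [hc, zero_mul] using continuousOn_const
  · have hvi : 0 < v i := (hv i).lt_of_ne' (hcv i hc)
    exact continuousOn_const.mul
      (ContinuousOn.log (by fun_prop) fun t ht => (add_pos_of_pos_of_nonneg hvi ht).ne')

theorem tendsto_sum_mul_log_add_sub (c v : ι → ℝ) :
    Filter.Tendsto (fun t => ∑ i, c i * Real.log (v i + t) - (∑ i, c i) * Real.log t)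
      Filter.atTop (nhds 0) := by
  have hterm : ∀ i, Filter.Tendsto (fun t => c i * (Real.log (t + v i) - Real.log t))
      Filter.atTop (nhds 0) :=
    fun i => by
      simpa only [mul_zero] using (Real.tendsto_log_comp_add_sub_log (v i)).const_mul (c i)
  simpa only [mul_sub, Finset.sum_sub_distrib, ← Finset.sum_mul, add_comm, Finset.sum_const_zero]
    using tendsto_finsetSum Finset.univ fun i _ => hterm i

-- `∫₀^∞ (c / (1 + t) - c / (v + t)) dt = c log v`, so resolvent sums integrate to entropies.
theorem integral_le_sum_mul_log_sub_of_resolvent {c' v' : κ → ℝ} {g : ℝ → ℝ} {b : ℝ}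
    (hv : ∀ i, 0 ≤ v i) (hcv : ∀ i, c i ≠ 0 → v i ≠ 0)
    (hv' : ∀ j, 0 ≤ v' j) (hcv' : ∀ j, c' j ≠ 0 → v' j ≠ 0)
    (hsum : ∑ j, c' j = ∑ i, c i) (hb : 0 ≤ b) (hg : ContinuousOn g (Set.Ici 0))
    (hg₀ : ∀ t, 0 ≤ g t)
    (hres : ∀ t, 0 < t → ∑ i, c i / (v i + t) + g t ≤ ∑ j, c' j / (v' j + t)) :
    ∫ t in 0..b, g t ≤ ∑ i, c i * Real.log (v i) - ∑ j, c' j * Real.log (v' j) := by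
  set G : ℝ → ℝ := fun t =>
    ∑ j, c' j * Real.log (v' j + t) - ∑ i, c i * Real.log (v i + t) with hG
  have hGcont : ContinuousOn G (Set.Ici 0) :=
    (continuousOn_sum_mul_log_add hv' hcv').sub (continuousOn_sum_mul_log_add hv hcv)
  have hincr : ∀ T, 0 ≤ T → ∫ t in 0..T, g t ≤ G T - G 0 := fun T hT =>
    intervalIntegral.integral_le_sub_of_hasDeriv_right_of_le hT
      (hGcont.mono Set.Icc_subset_Ici_self)
      (fun t ht => ((hasDerivAt_sum_mul_log_add hv' ht.1).sub
        (hasDerivAt_sum_mul_log_add hv ht.1)).hasDerivWithinAt)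
      (hg.mono Set.Icc_subset_Ici_self).integrableOn_Icc
      (fun t ht => le_sub_iff_add_le'.2 (hres t ht.1))
  have hlim : Filter.Tendsto (fun T => G T - G 0) Filter.atTop (nhds (0 - 0 - G 0)) := by
    refine (((tendsto_sum_mul_log_add_sub c' v').sub
      (tendsto_sum_mul_log_add_sub c v)).congr fun T => ?_).sub_const _
    rw [hsum, sub_sub_sub_cancel_right]
  have hbound : ∫ t in 0..b, g t ≤ 0 - 0 - G 0 := by
    refine ge_of_tendsto hlim ?_
    filter_upwards [Filter.eventually_ge_atTop b] with T hT
    have hint : IntervalIntegrable g MeasureTheory.volume 0 T :=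
      (hg.mono Set.Icc_subset_Ici_self).intervalIntegrable_of_Icc (hb.trans hT)
    exact (intervalIntegral.integral_mono_interval le_rfl hb hT
      (Filter.Eventually.of_forall hg₀) hint).trans (hincr T (hb.trans hT))
  simpa only [hG, add_zero, sub_zero, zero_sub, neg_sub] using hbound

end LogSum

section Resolvent

open RCLike
open scoped ComplexOrder

variable {𝕜 m n : Type*} [RCLike 𝕜] [Fintype m] [Fintype n]

theorem re_trace_conjTranspose_mul_self (M : Matrix n m 𝕜) :
    re (Mᴴ * M).trace = ∑ j, ∑ i, ‖M i j‖ ^ 2 := by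
  simp only [trace, diag, mul_apply, conjTranspose_apply, star_def, RCLike.conj_mul, map_sum,
    ← ofReal_pow, ofReal_re]

variable [DecidableEq n]

-- Expand `0 ≤ tr ((V - R⁻¹A)ᴴ R (V - R⁻¹A))`.
theorem two_mul_re_trace_sub_le_re_trace_inv {R : Matrix n n 𝕜} (hR : R.PosDef)
    (A V : Matrix n m 𝕜) :
    2 * re (Vᴴ * A).trace - re (Vᴴ * R * V).trace ≤ re (R⁻¹ * (A * Aᴴ)).trace := by
  have hdet : IsUnit R.det := (isUnit_iff_isUnit_det R).1 hR.isUnit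
  have hexpand : (V - R⁻¹ * A)ᴴ * R * (V - R⁻¹ * A) =
      Vᴴ * R * V - Vᴴ * A - (Vᴴ * A)ᴴ + Aᴴ * (R⁻¹ * A) := by
    rw [conjTranspose_sub, conjTranspose_mul, conjTranspose_nonsing_inv, hR.isHermitian.eq]
    simp only [Matrix.sub_mul, Matrix.mul_sub, Matrix.mul_assoc, conjTranspose_mul,
      conjTranspose_conjTranspose, mul_nonsing_inv_cancel_left R _ hdet,
      nonsing_inv_mul_cancel_left R _ hdet]
    abel
  have hnonneg : 0 ≤ re ((V - R⁻¹ * A)ᴴ * R * (V - R⁻¹ * A)).trace :=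
    (nonneg_iff.1 (hR.posSemidef.conjTranspose_mul_mul_same _).trace_nonneg).1
  rw [hexpand, trace_add, trace_sub, trace_sub, trace_conjTranspose, star_def, map_add, map_sub,
    map_sub, conj_re, trace_mul_comm Aᴴ, Matrix.mul_assoc R⁻¹] at hnonneg
  linarith

theorem trace_inv_add_smul_one_mul {ρ : Matrix n n 𝕜} (hρ : ρ.IsHermitian) {t : ℝ}
    (ht : ∀ j, hρ.eigenvalues j + t ≠ 0) :
    ((ρ + (t : 𝕜) • 1)⁻¹ * ρ).trace =
      ((∑ j, hρ.eigenvalues j / (hρ.eigenvalues j + t) : ℝ) : 𝕜) := by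
  set φ := Unitary.conjStarAlgAut 𝕜 _ hρ.eigenvectorUnitary
  set d : n → 𝕜 := fun j => hρ.eigenvalues j
  have hd : ∀ j, d j + t ≠ 0 := fun j => by
    simpa only [d, ← ofReal_add] using ofReal_ne_zero.2 (ht j)
  have hspec : ρ = φ (diagonal d) := hρ.spectral_theorem
  have hshift : ρ + (t : 𝕜) • 1 = φ (diagonal fun j => d j + t) := by
    rw [← diagonal_add, map_add, ← hspec, ← smul_one_eq_diagonal, map_smul, map_one]
  have hinv : (ρ + (t : 𝕜) • 1)⁻¹ = φ (diagonal fun j => (d j + t)⁻¹) := by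
    refine inv_eq_left_inv ?_
    rw [hshift, ← map_mul, diagonal_mul_diagonal]
    simp only [inv_mul_cancel₀ (hd _), diagonal_one, map_one]
  have htrace : ∀ M, (φ M).trace = M.trace := fun M => by
    rw [Unitary.conjStarAlgAut_apply, trace_mul_comm, ← Matrix.mul_assoc, Unitary.coe_star_mul_self,
      Matrix.one_mul]
  calc ((ρ + (t : 𝕜) • 1)⁻¹ * ρ).trace
      = (φ (diagonal fun j => (d j + t)⁻¹ * d j)).trace := by
        rw [hinv, ← diagonal_mul_diagonal, map_mul, ← hspec]
    _ = ∑ j, (d j + t)⁻¹ * d j := by rw [htrace, trace_diagonal]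
    _ = _ := by simp only [d, inv_mul_eq_div]; push_cast; rfl

theorem sum_eigenvalues_self_mul_conjTranspose (A : Matrix n m 𝕜) (hA : (A * Aᴴ).IsHermitian) :
    ∑ j, hA.eigenvalues j = ∑ x, ∑ y, ‖A y x‖ ^ 2 := by
  rw [← re_trace_conjTranspose_mul_self, trace_mul_comm, hA.trace_eq_sum_eigenvalues, ← ofReal_sum,
    ofReal_re]

theorem two_mul_re_trace_sub_le_sum_eigenvalues_div (A V : Matrix n m 𝕜)
    (hA : (A * Aᴴ).IsHermitian) {t : ℝ} (ht : 0 < t) :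
    2 * re (Vᴴ * A).trace - re ((Aᴴ * V)ᴴ * (Aᴴ * V)).trace - t * re (Vᴴ * V).trace ≤
      ∑ j, hA.eigenvalues j / (hA.eigenvalues j + t) := by
  have hρ : (A * Aᴴ).PosSemidef := posSemidef_self_mul_conjTranspose A
  have hR : (A * Aᴴ + (t : 𝕜) • 1).PosDef :=
    PosDef.posSemidef_add hρ (PosDef.one.smul (ofReal_pos.2 ht))
  have hVRV : re (Vᴴ * (A * Aᴴ + (t : 𝕜) • 1) * V).trace =
      re ((Aᴴ * V)ᴴ * (Aᴴ * V)).trace + t * re (Vᴴ * V).trace := by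
    simp only [Matrix.mul_add, Matrix.add_mul, Matrix.mul_smul, Matrix.smul_mul, Matrix.mul_one,
      trace_add, trace_smul, map_add, smul_eq_mul, re_ofReal_mul, conjTranspose_mul,
      conjTranspose_conjTranspose, Matrix.mul_assoc]
  have hsquare := two_mul_re_trace_sub_le_re_trace_inv hR A V
  rw [hVRV, trace_inv_add_smul_one_mul hA fun j =>
    (add_pos_of_nonneg_of_pos (hρ.eigenvalues_nonneg j) ht).ne', ofReal_re] at hsquare
  linarith

theorem sum_weight_sub_overlap_sq_le_sum_eigenvalues_div (A : Matrix n m 𝕜) {w : n → m → ℝ}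
    (hw : ∀ y x, 0 ≤ w y x) (hA : (A * Aᴴ).IsHermitian) {t : ℝ} (ht : 0 < t) :
    ∑ x, ∑ y, (2 * w y x - t * w y x ^ 2) * ‖A y x‖ ^ 2 -
        ∑ x, ∑ x', (∑ y, ‖A y x‖ * (w y x * ‖A y x'‖)) ^ 2 ≤
      ∑ j, hA.eigenvalues j / (hA.eigenvalues j + t) := by
  set V : Matrix n m 𝕜 := of fun y x => (w y x : 𝕜) * A y x with hV
  have hVA : re (Vᴴ * A).trace = ∑ x, ∑ y, w y x * ‖A y x‖ ^ 2 := by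
    simp only [trace, diag, mul_apply, conjTranspose_apply, hV, of_apply, star_mul', star_def,
      conj_ofReal, mul_assoc, RCLike.conj_mul, map_sum, re_ofReal_mul, ← ofReal_pow, ofReal_re]
  have hVV : re (Vᴴ * V).trace = ∑ x, ∑ y, w y x ^ 2 * ‖A y x‖ ^ 2 := by
    simp only [re_trace_conjTranspose_mul_self, hV, of_apply, norm_mul, mul_pow, norm_ofReal,
      sq_abs]
  have hentry : ∀ x' x, ‖(Aᴴ * V) x' x‖ ≤ ∑ y, ‖A y x‖ * (w y x * ‖A y x'‖) := by
    intro x' x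
    rw [mul_apply]
    refine (norm_sum_le _ _).trans_eq (Finset.sum_congr rfl fun y _ => ?_)
    rw [conjTranspose_apply, hV, of_apply, norm_mul, norm_star, norm_mul, norm_ofReal,
      abs_of_nonneg (hw y x)]
    ring
  have hoverlap : re ((Aᴴ * V)ᴴ * (Aᴴ * V)).trace ≤
      ∑ x, ∑ x', (∑ y, ‖A y x‖ * (w y x * ‖A y x'‖)) ^ 2 := by
    rw [re_trace_conjTranspose_mul_self]
    gcongr with x _ x' _
    exact hentry x' x
  have hsum : ∑ x, ∑ y, (2 * w y x - t * w y x ^ 2) * ‖A y x‖ ^ 2 =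
      2 * re (Vᴴ * A).trace - t * re (Vᴴ * V).trace := by
    simp only [hVA, hVV, sub_mul, Finset.sum_sub_distrib, mul_assoc, Finset.mul_sum]
  linarith [two_mul_re_trace_sub_le_sum_eigenvalues_div A V hA ht]

end Resolvent

section Leakage

variable {X Y : Type*} {P : X × Y → ℝ}

theorem margX_nonneg [Fintype Y] (hP : ∀ xy, 0 ≤ P xy) (x : X) : 0 ≤ margX P x :=
  Finset.sum_nonneg fun _ _ => hP _

theorem margY_nonneg [Fintype X] (hP : ∀ xy, 0 ≤ P xy) (y : Y) : 0 ≤ margY P y :=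
  Finset.sum_nonneg fun _ _ => hP _

theorem margX_pos [Fintype Y] (hP : ∀ xy, 0 ≤ P xy) {x : X} {y : Y} (h : P (x, y) ≠ 0) :
    0 < margX P x :=
  Finset.sum_pos' (fun _ _ => hP _) ⟨y, Finset.mem_univ y, (hP _).lt_of_ne' h⟩

theorem margY_pos [Fintype X] (hP : ∀ xy, 0 ≤ P xy) {x : X} {y : Y} (h : P (x, y) ≠ 0) :
    0 < margY P y :=
  Finset.sum_pos' (fun _ _ => hP _) ⟨x, Finset.mem_univ x, (hP _).lt_of_ne' h⟩

/-- The regular embedding `ψ_θ` as a `Y × X` matrix. -/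
def regEmbMatrix (P θ : X × Y → ℝ) : Matrix Y X ℂ :=
  of fun y x => regEmb P θ (x, y)

theorem norm_regEmbMatrix (P θ : X × Y → ℝ) (y : Y) (x : X) :
    ‖regEmbMatrix P θ y x‖ = √(P (x, y)) := by
  rw [regEmbMatrix, of_apply, regEmb, norm_mul, Complex.norm_exp_I_mul_ofReal, one_mul,
    Complex.norm_of_nonneg (Real.sqrt_nonneg _)]

theorem rhoB_eq_regEmbMatrix_mul_conjTranspose [Fintype X] (P θ : X × Y → ℝ) :
    rhoB P θ = regEmbMatrix P θ * (regEmbMatrix P θ)ᴴ :=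
  rfl

section Entropy

variable [Fintype X] [Fintype Y]

theorem vNE_mul_log_two [DecidableEq Y] {ρ : Matrix Y Y ℂ} (hρ : ρ.IsHermitian) :
    vNE ρ * Real.log 2 = -∑ j, hρ.eigenvalues j * Real.log (hρ.eigenvalues j) := by
  have hlog : Real.log 2 ≠ 0 := (Real.log_pos one_lt_two).ne'
  rw [vNE, dif_pos hρ, neg_mul, Finset.sum_mul]
  simp only [Real.logb, mul_assoc, div_mul_cancel₀ _ hlog]
  congr!

theorem mutualInfo_mul_log_two (P : X × Y → ℝ) :
    mutualInfo P * Real.log 2 =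
      -∑ xy : X × Y, P xy * Real.log (margX P xy.1 * margY P xy.2 / P xy) := by
  have hlog : Real.log 2 ≠ 0 := (Real.log_pos one_lt_two).ne'
  simp only [mutualInfo, Fintype.sum_prod_type, Finset.sum_mul, ← Finset.sum_neg_distrib,
    Real.logb, mul_assoc, div_mul_cancel₀ _ hlog, ← mul_neg, ← Real.log_inv, inv_div]

end Entropy

section OverlapDefect

variable [Fintype X] [Fintype Y]

/-- The optimal test weight in the variational bound for the resolvent of `ρ_B`: the inverse of
`P_X(x) P_Y(y) / P(x,y) + t` on the support of `P`, extended by `0`. -/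
def resolventWeight (P : X × Y → ℝ) (t : ℝ) (xy : X × Y) : ℝ :=
  P xy / (margX P xy.1 * margY P xy.2 + t * P xy)

/-- The `2 × 2` minor, in columns `y` and `z`, of the amplitude row `√P(x,·)` and the weighted
amplitude row of `x'`. All these minors vanish iff the Cauchy–Schwarz bound for the overlap of the
two rows is an equality. -/
def overlapMinor (P : X × Y → ℝ) (t : ℝ) (x x' : X) (y z : Y) : ℝ :=
  √(P (x, y)) * (resolventWeight P t (x, z) * √(P (x', z))) -
    √(P (x, z)) * (resolventWeight P t (x, y) * √(P (x', y)))

/-- The total loss in the Cauchy–Schwarz bounds for the overlaps of the rows, in the form given by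
Lagrange's identity. It does not depend on the phase function. -/
def overlapDefect (P : X × Y → ℝ) (t : ℝ) : ℝ :=
  (∑ x, ∑ x', ∑ y, ∑ z, overlapMinor P t x x' y z ^ 2) / 2

theorem resolventWeight_nonneg (hP : ∀ xy, 0 ≤ P xy) {t : ℝ} (ht : 0 ≤ t) (xy : X × Y) :
    0 ≤ resolventWeight P t xy :=
  div_nonneg (hP _) (add_nonneg (mul_nonneg (margX_nonneg hP _) (margY_nonneg hP _))
    (mul_nonneg ht (hP _)))

theorem resolventWeight_denom_pos (hP : ∀ xy, 0 ≤ P xy) {t : ℝ} (ht : 0 ≤ t) {xy : X × Y}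
    (h : P xy ≠ 0) : 0 < margX P xy.1 * margY P xy.2 + t * P xy :=
  add_pos_of_pos_of_nonneg (mul_pos (margX_pos hP h) (margY_pos hP h)) (mul_nonneg ht (hP xy))

theorem resolventWeight_pos (hP : ∀ xy, 0 ≤ P xy) {t : ℝ} (ht : 0 ≤ t) {xy : X × Y}
    (h : P xy ≠ 0) : 0 < resolventWeight P t xy :=
  div_pos ((hP xy).lt_of_ne' h) (resolventWeight_denom_pos hP ht h)

theorem continuousOn_resolventWeight (hP : ∀ xy, 0 ≤ P xy) (xy : X × Y) :
    ContinuousOn (fun t => resolventWeight P t xy) (Set.Ici 0) := by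
  rcases eq_or_ne (P xy) 0 with h | h
  · simpa only [resolventWeight, h, zero_div] using continuousOn_const
  · exact ContinuousOn.div (by fun_prop) (by fun_prop)
      fun t ht => (resolventWeight_denom_pos hP ht h).ne'

theorem resolventWeight_mul_self (P : X × Y → ℝ) (t : ℝ) (xy : X × Y) :
    resolventWeight P t xy * P xy = P xy / (margX P xy.1 * margY P xy.2 / P xy + t) := by
  rcases eq_or_ne (P xy) 0 with h | h
  · simp only [h, mul_zero, zero_div]
  · rw [resolventWeight, div_add' _ _ _ h, div_div_eq_mul_div, div_mul_eq_mul_div]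

theorem resolventWeight_mul_denom (hP : ∀ xy, 0 ≤ P xy) {t : ℝ} (ht : 0 ≤ t) (xy : X × Y) :
    resolventWeight P t xy * (margX P xy.1 * margY P xy.2 + t * P xy) = P xy := by
  rcases eq_or_ne (P xy) 0 with h | h
  · simp only [resolventWeight, h, zero_div, zero_mul]
  · exact div_mul_cancel₀ _ (resolventWeight_denom_pos hP ht h).ne'

theorem overlapDefect_nonneg (P : X × Y → ℝ) (t : ℝ) : 0 ≤ overlapDefect P t := by
  unfold overlapDefect
  positivity

theorem continuousOn_overlapDefect (hP : ∀ xy, 0 ≤ P xy) :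
    ContinuousOn (overlapDefect P) (Set.Ici 0) := by
  have hw := continuousOn_resolventWeight hP
  unfold overlapDefect overlapMinor
  fun_prop

theorem overlapMinor_eq_zero_of_overlapDefect_eq_zero {t : ℝ} (h : overlapDefect P t = 0)
    (x x' : X) (y z : Y) : overlapMinor P t x x' y z = 0 := by
  have hsum : ∑ x, ∑ x', ∑ y, ∑ z, overlapMinor P t x x' y z ^ 2 = 0 := by
    rw [overlapDefect] at h
    linarith
  simp (discharger := intros; positivity) only [Finset.sum_eq_zero_iff_of_nonneg, Finset.mem_univ,
    true_implies, sq_eq_zero_iff] at hsum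
  exact hsum x x' y z

theorem sum_overlap_sq_add_overlapDefect (hP : ∀ xy, 0 ≤ P xy) (t : ℝ) :
    ∑ x, ∑ x', (∑ y, √(P (x, y)) * (resolventWeight P t (x, y) * √(P (x', y)))) ^ 2 +
        overlapDefect P t =
      ∑ xy : X × Y, resolventWeight P t xy ^ 2 * (margX P xy.1 * margY P xy.2) := by
  have hpair : ∀ x x',
      (∑ y, √(P (x, y)) * (resolventWeight P t (x, y) * √(P (x', y)))) ^ 2 +
          (∑ y, ∑ z, overlapMinor P t x x' y z ^ 2) / 2 =
        ∑ y, resolventWeight P t (x, y) ^ 2 * margX P x * P (x', y) := by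
    intro x x'
    have hlagrange := sum_sq_mul_sum_sq_sub_sq_sum_mul (fun y => √(P (x, y)))
      fun y => resolventWeight P t (x, y) * √(P (x', y))
    simp only [mul_pow, Real.sq_sqrt (hP _)] at hlagrange
    have hfactor : ∑ y, resolventWeight P t (x, y) ^ 2 * margX P x * P (x', y) =
        margX P x * ∑ y, resolventWeight P t (x, y) ^ 2 * P (x', y) := by
      rw [Finset.mul_sum]
      exact Finset.sum_congr rfl fun y _ => by ring
    rw [hfactor, margX]
    unfold overlapMinor
    linarith
  simp only [overlapDefect, Finset.sum_div, ← Finset.sum_add_distrib] at hpair ⊢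
  simp only [hpair, Fintype.sum_prod_type]
  refine Finset.sum_congr rfl fun x _ => ?_
  rw [Finset.sum_comm]
  simp only [margY, Finset.mul_sum, mul_assoc]

theorem sum_div_add_overlapDefect_le [DecidableEq Y] (hP : ∀ xy, 0 ≤ P xy) (θ : X × Y → ℝ)
    (hρ : (regEmbMatrix P θ * (regEmbMatrix P θ)ᴴ).IsHermitian) {t : ℝ} (ht : 0 < t) :
    ∑ xy : X × Y, P xy / (margX P xy.1 * margY P xy.2 / P xy + t) + overlapDefect P t ≤
      ∑ j, hρ.eigenvalues j / (hρ.eigenvalues j + t) := by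
  have hweight : ∀ xy : X × Y, P xy / (margX P xy.1 * margY P xy.2 / P xy + t) =
      (2 * resolventWeight P t xy - t * resolventWeight P t xy ^ 2) * P xy -
        resolventWeight P t xy ^ 2 * (margX P xy.1 * margY P xy.2) := fun xy => by
    rw [← resolventWeight_mul_self]
    linear_combination resolventWeight P t xy * resolventWeight_mul_denom hP ht.le xy
  have hbound : ∑ xy, (2 * resolventWeight P t xy - t * resolventWeight P t xy ^ 2) * P xy -
      ∑ x, ∑ x', (∑ y, √(P (x, y)) * (resolventWeight P t (x, y) * √(P (x', y)))) ^ 2 ≤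
      ∑ j, hρ.eigenvalues j / (hρ.eigenvalues j + t) := by
    simpa only [norm_regEmbMatrix, Real.sq_sqrt (hP _), Fintype.sum_prod_type] using
      sum_weight_sub_overlap_sq_le_sum_eigenvalues_div (regEmbMatrix P θ)
        (fun y x => resolventWeight_nonneg hP ht.le (x, y)) hρ ht
  simp only [hweight, Finset.sum_sub_distrib, ← sum_overlap_sq_add_overlapDefect hP]
  linarith

theorem integral_overlapDefect_le_leakReg_mul_log_two (hP : ∀ xy, 0 ≤ P xy) (θ : X × Y → ℝ)
    {b : ℝ} (hb : 0 ≤ b) : ∫ t in 0..b, overlapDefect P t ≤ leakReg P θ * Real.log 2 := by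
  classical
  have hρ := isHermitian_mul_conjTranspose_self (regEmbMatrix P θ)
  have hmass : ∑ j, hρ.eigenvalues j = ∑ xy, P xy := by
    simp only [sum_eigenvalues_self_mul_conjTranspose, norm_regEmbMatrix, Real.sq_sqrt (hP _),
      Fintype.sum_prod_type]
  rw [leakReg, rhoB_eq_regEmbMatrix_mul_conjTranspose, sub_mul, vNE_mul_log_two hρ,
    mutualInfo_mul_log_two, neg_sub_neg]
  exact integral_le_sum_mul_log_sub_of_resolvent
    (fun xy => div_nonneg (mul_nonneg (margX_nonneg hP _) (margY_nonneg hP _)) (hP xy))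
    (fun xy h => (div_pos (mul_pos (margX_pos hP h) (margY_pos hP h))
      ((hP xy).lt_of_ne' h)).ne')
    (eigenvalues_self_mul_conjTranspose_nonneg _) (fun _ => id) hmass hb
    (continuousOn_overlapDefect hP) (overlapDefect_nonneg P)
    fun t ht => sum_div_add_overlapDefect_le hP θ hρ ht

theorem integral_overlapDefect_le_leakPrim_mul_log_two (hP : ∀ xy, 0 ≤ P xy) {b : ℝ}
    (hb : 0 ≤ b) : ∫ t in 0..b, overlapDefect P t ≤ leakPrim P * Real.log 2 := by
  have hlog : 0 < Real.log 2 := Real.log_pos one_lt_two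
  exact (div_le_iff₀ hlog).1 (le_ciInf fun θ =>
    (div_le_iff₀ hlog).2 (integral_overlapDefect_le_leakReg_mul_log_two hP θ hb))

theorem overlapDefect_eq_zero_of_leakPrim_eq_zero (hP : ∀ xy, 0 ≤ P xy) (hleak : leakPrim P = 0)
    {t : ℝ} (ht : 0 ≤ t) : overlapDefect P t = 0 := by
  by_contra hne
  have hpos : 0 < ∫ s in 0..(t + 1), overlapDefect P s :=
    intervalIntegral.integral_pos (by positivity)
      ((continuousOn_overlapDefect hP).mono Set.Icc_subset_Ici_self)
      (fun s _ => overlapDefect_nonneg P s)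
      ⟨t, ⟨ht, le_add_of_nonneg_right zero_le_one⟩, (overlapDefect_nonneg P t).lt_of_ne' hne⟩
  have hle := integral_overlapDefect_le_leakPrim_mul_log_two hP (b := t + 1) (by positivity)
  rw [hleak, zero_mul] at hle
  exact hle.not_gt hpos

end OverlapDefect

section Trivial

variable [Fintype Y]

theorem fX_eq_of_mul_eq_mul (hP : ∀ xy, 0 ≤ P xy) {x x' : X} {y : Y} (hx : P (x, y) ≠ 0)
    (hx' : P (x', y) ≠ 0) (hprop : ∀ z, P (x, y) * P (x', z) = P (x, z) * P (x', y)) :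
    fX P x = fX P x' := by
  have hmarg : P (x, y) * margX P x' = margX P x * P (x', y) := by
    simp only [margX, Finset.mul_sum, Finset.sum_mul, hprop]
  funext z
  rw [fX, fX, div_eq_div_iff (margX_pos hP hx).ne' (margX_pos hP hx').ne']
  refine mul_left_cancel₀ (mul_ne_zero hx hx') ?_
  linear_combination P (x, z) * P (x', y) * hmarg - margX P x * P (x', y) * hprop z

variable [Fintype X]

-- The case `x' = x` makes the weights constant on the support of row `x`.
theorem mul_eq_mul_of_overlapMinor_eq_zero (hP : ∀ xy, 0 ≤ P xy) {t : ℝ} (ht : 0 ≤ t)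
    {x x' : X} {y z : Y} (hxx : overlapMinor P t x x y z = 0)
    (hxx' : overlapMinor P t x x' y z = 0) (hy : P (x, y) ≠ 0) (hz : P (x, z) ≠ 0) :
    P (x, y) * P (x', z) = P (x, z) * P (x', y) := by
  have hsy : √(P (x, y)) ≠ 0 := (Real.sqrt_pos.2 ((hP _).lt_of_ne' hy)).ne'
  have hsz : √(P (x, z)) ≠ 0 := (Real.sqrt_pos.2 ((hP _).lt_of_ne' hz)).ne'
  have hweight : resolventWeight P t (x, z) = resolventWeight P t (x, y) := by
    refine mul_left_cancel₀ (mul_ne_zero hsy hsz) ?_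
    rw [overlapMinor] at hxx
    linear_combination hxx
  have hamplitude : √(P (x, y)) * √(P (x', z)) = √(P (x, z)) * √(P (x', y)) := by
    refine mul_left_cancel₀ (resolventWeight_pos hP ht hy).ne' ?_
    rw [overlapMinor, hweight] at hxx'
    linear_combination hxx'
  calc P (x, y) * P (x', z) = (√(P (x, y)) * √(P (x', z))) ^ 2 := by
        rw [mul_pow, Real.sq_sqrt (hP _), Real.sq_sqrt (hP _)]
    _ = P (x, z) * P (x', y) := by
        rw [hamplitude, mul_pow, Real.sq_sqrt (hP _), Real.sq_sqrt (hP _)]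

theorem fX_eq_of_overlapDefect_eq_zero (hP : ∀ xy, 0 ≤ P xy) {t : ℝ} (ht : 0 ≤ t)
    (h : overlapDefect P t = 0) {x x' : X} {y : Y} (hx : P (x, y) ≠ 0) (hx' : P (x', y) ≠ 0) :
    fX P x = fX P x' := by
  have hprop : ∀ u u' z, P (u, y) ≠ 0 → P (u, z) ≠ 0 →
      P (u, y) * P (u', z) = P (u, z) * P (u', y) := fun u u' z =>
    mul_eq_mul_of_overlapMinor_eq_zero hP ht
      (overlapMinor_eq_zero_of_overlapDefect_eq_zero h u u y z)
      (overlapMinor_eq_zero_of_overlapDefect_eq_zero h u u' y z)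
  refine fX_eq_of_mul_eq_mul hP hx hx' fun z => ?_
  by_cases hz : P (x, z) = 0
  · by_cases hz' : P (x', z) = 0
    · rw [hz, hz', mul_zero, zero_mul]
    · linear_combination -hprop x' x z hx' hz'
  · exact hprop x x' z hx hz

theorem condEntDep_eq_zero_of_fX_eq
    (h : ∀ x x' y, P (x, y) ≠ 0 → P (x', y) ≠ 0 → fX P x = fX P x') : condEntDep P = 0 := by
  classical
  rw [condEntDep, entDepJoint, shannon, sub_eq_zero, neg_inj, Finset.sum_comm]
  refine Finset.sum_congr rfl fun y _ => ?_
  exact sum_image_apply_sum_fiber (φ := fun q : ℝ => q * Real.logb 2 q) (zero_mul _)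
    fun x x' => h x x' y

end Trivial

end Leakage

/-- If the leakage `Δ_P` of a primitive `P` (the infimum over all phase
functions of the leakage of the corresponding regular embedding) equals `0`, then `P` is
trivial, i.e. `H(X↘Y|Y) = 0`. -/
theorem leakPrim_eq_zero_implies_trivial
    {𝒳 𝒴 : Type*} [Fintype 𝒳] [Fintype 𝒴] [Nonempty 𝒳] [Nonempty 𝒴]
    (P : 𝒳 × 𝒴 → ℝ) (hP0 : ∀ xy, 0 ≤ P xy) (hP1 : ∑ xy, P xy = 1)
    (hleak : leakPrim P = 0) :
    condEntDep P = 0 := by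
  have hdefect : overlapDefect P 0 = 0 :=
    overlapDefect_eq_zero_of_leakPrim_eq_zero hP0 hleak le_rfl
  exact condEntDep_eq_zero_of_fX_eq fun _ _ _ hx hx' =>
    fX_eq_of_overlapDefect_eq_zero hP0 le_rfl hdefect hx hx'
end
end

section
/- (Leakage of noisy 1-out-of-2 OT.) Let 0 ≤ p < 1/2 − 1/(2·√2). Every regular embedding ψ_θ of the primitive P^{OT,p} satisfies Δ(ψ_θ) ≥ (1/2 − p − √(p·(1−p)))² / (32·ln 2). (This is the bound established by the paper's proof of its Theorem on noisy OT.) -/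
open scoped BigOperators
open Matrix

noncomputable section

/-- The randomized noisy 1-out-of-2 OT primitive `P^{OT,p}` on `𝒳 = {0,1}×{0,1}` and
`𝒴 = {0,1}×{0,1}`: `P((x₀,x₁),(c,y)) = (1−p)/8` if `y = x_c`, and `p/8` otherwise. -/
def POTnoisy (p : ℝ) : (Bool × Bool) × (Bool × Bool) → ℝ := fun q =>
  if q.2.2 = (if q.2.1 then q.1.2 else q.1.1) then (1 - p) / 8 else p / 8

/-!
The von Neumann entropy dominates the collision entropy `-log₂ Tr ρ²`, and `Tr ρ_B²` is the sum of
the squared moduli of the entries of `ρ_B`. By the triangle inequality each modulus is at most the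
value it takes without phases, a Bhattacharyya coefficient of `P`, so the leakage has a lower bound
independent of `θ`. For noisy OT, with `s = √(p(1-p))`, this reads
`Tr ρ_B² ≤ 3/8 + s/2 + 3s²/2`, while `I(X;Y) = 1 - h(p)`. What remains is an inequality in the one
variable `p`, which bounding each logarithm by a tangent makes quadratic.
-/

section Entropy

variable {α : Type*} [Fintype α]

lemma log_le_div_sub_one_add_log {x b : ℝ} (hx : 0 < x) (hb : 0 < b) :
    Real.log x ≤ x / b - 1 + Real.log b := by
  have h := Real.log_le_sub_one_of_pos (div_pos hx hb)
  rw [Real.log_div hx.ne' hb.ne'] at h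
  linarith

lemma mul_le_negMulLog {x b : ℝ} (hx : 0 ≤ x) (hb : 0 < b) :
    x * (1 - x / b - Real.log b) ≤ Real.negMulLog x := by
  rcases hx.eq_or_lt with rfl | hx
  · simp
  · have h := mul_le_mul_of_nonneg_left (log_le_div_sub_one_add_log hx hb) hx.le
    rw [Real.negMulLog]
    linarith

lemma shannon_eq_sum_negMulLog_div (p : α → ℝ) :
    shannon p = (∑ a, Real.negMulLog (p a)) / Real.log 2 := by
  simp only [shannon, Real.logb, Real.negMulLog, Finset.sum_div, ← Finset.sum_neg_distrib,
    neg_mul, neg_div, mul_div_assoc]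

lemma shannon_uniform [Nonempty α] :
    shannon (fun _ : α => 1 / (Fintype.card α : ℝ)) = Real.logb 2 (Fintype.card α) := by
  simp [shannon, Real.logb_inv]

lemma sum_sq_pos_of_sum_eq_one {p : α → ℝ} (hsum : ∑ a, p a = 1) : 0 < ∑ a, p a ^ 2 := by
  obtain ⟨a, ha, hpa⟩ := Finset.exists_ne_zero_of_sum_ne_zero (hsum ▸ one_ne_zero)
  exact Finset.sum_pos' (fun a _ => sq_nonneg (p a)) ⟨a, ha, by positivity⟩

lemma neg_logb_sum_sq_le_shannon {p : α → ℝ} (hp : ∀ a, 0 ≤ p a) (hsum : ∑ a, p a = 1) :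
    -Real.logb 2 (∑ a, p a ^ 2) ≤ shannon p := by
  set Q := ∑ a, p a ^ 2 with hQ
  have hQpos : 0 < Q := sum_sq_pos_of_sum_eq_one hsum
  rw [shannon_eq_sum_negMulLog_div, Real.logb, ← neg_div]
  refine div_le_div_of_nonneg_right ?_ (Real.log_nonneg one_le_two)
  calc -Real.log Q = (∑ a, p a) * (1 - Real.log Q) - (∑ a, p a ^ 2) / Q := by
        rw [hsum, ← hQ, div_self hQpos.ne']
        ring
    _ = ∑ a, p a * (1 - p a / Q - Real.log Q) := by
        rw [Finset.sum_mul, Finset.sum_div, ← Finset.sum_sub_distrib]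
        exact Finset.sum_congr rfl fun a _ => by ring
    _ ≤ ∑ a, Real.negMulLog (p a) :=
        Finset.sum_le_sum fun a _ => mul_le_negMulLog (hp a) hQpos

end Entropy

section MutualInfo

variable {X Y : Type*} [Fintype X] [Fintype Y] {P : X × Y → ℝ}

lemma mutualInfo_eq_shannon (hP : ∀ q, 0 ≤ P q) :
    mutualInfo P = shannon (margX P) + shannon (margY P) - shannon P := by
  have hterm (x : X) (y : Y) :
      P (x, y) * Real.logb 2 (P (x, y) / (margX P x * margY P y)) =
        P (x, y) * Real.logb 2 (P (x, y)) - P (x, y) * Real.logb 2 (margX P x) -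
          P (x, y) * Real.logb 2 (margY P y) := by
    rcases (hP (x, y)).eq_or_lt with h | h
    · simp [← h]
    · have hX : 0 < margX P x :=
        h.trans_le (Finset.single_le_sum (fun y _ => hP (x, y)) (Finset.mem_univ y))
      have hY : 0 < margY P y :=
        h.trans_le (Finset.single_le_sum (fun x _ => hP (x, y)) (Finset.mem_univ x))
      rw [Real.logb_div h.ne' (mul_pos hX hY).ne', Real.logb_mul hX.ne' hY.ne']
      ring
  have hsumX : ∑ x, ∑ y, P (x, y) * Real.logb 2 (margX P x) = -shannon (margX P) := by
    simp only [shannon, neg_neg, ← Finset.sum_mul, margX]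
  have hsumY : ∑ x, ∑ y, P (x, y) * Real.logb 2 (margY P y) = -shannon (margY P) := by
    rw [Finset.sum_comm]
    simp only [shannon, neg_neg, ← Finset.sum_mul, margY]
  have hsumXY : ∑ x, ∑ y, P (x, y) * Real.logb 2 (P (x, y)) = -shannon P := by
    rw [shannon, neg_neg, Fintype.sum_prod_type]
  simp only [mutualInfo, hterm, Finset.sum_sub_distrib, hsumX, hsumY, hsumXY]
  ring

end MutualInfo

section Purity

variable {𝕜 n : Type*} [RCLike 𝕜] [Fintype n]

/-- The purity `Tr ρ²` of a density matrix `ρ`. The trace of the square of a Hermitian matrix is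
real, so taking the real part loses nothing. -/
def purity (ρ : Matrix n n 𝕜) : ℝ := RCLike.re (ρ * ρ).trace

lemma purity_eq_sum_norm_sq {ρ : Matrix n n 𝕜} (hρ : ρ.IsHermitian) :
    purity ρ = ∑ i, ∑ j, ‖ρ i j‖ ^ 2 := by
  simp only [purity, Matrix.trace, Matrix.diag, Matrix.mul_apply, map_sum]
  refine Finset.sum_congr rfl fun i _ => Finset.sum_congr rfl fun j _ => ?_
  rw [← hρ.apply j i, RCLike.star_def, RCLike.mul_conj]
  norm_cast

lemma purity_eq_sum_sq_eigenvalues [DecidableEq n] {ρ : Matrix n n 𝕜} (hρ : ρ.IsHermitian) :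
    purity ρ = ∑ i, hρ.eigenvalues i ^ 2 := by
  have htrace : (ρ * ρ).trace = ∑ i, (hρ.eigenvalues i : 𝕜) ^ 2 := by
    conv_lhs => rw [hρ.spectral_theorem]
    rw [← map_mul, Unitary.conjStarAlgAut_apply, Matrix.trace_mul_cycle, Unitary.coe_star_mul_self,
      one_mul, Matrix.diagonal_mul_diagonal, Matrix.trace_diagonal]
    simp only [Function.comp_apply, sq]
  rw [purity, htrace]
  norm_cast

lemma sum_eigenvalues_eq_one [DecidableEq n] {ρ : Matrix n n 𝕜} (hρ : ρ.IsHermitian)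
    (htr : ρ.trace = 1) : ∑ i, hρ.eigenvalues i = 1 := by
  exact_mod_cast hρ.trace_eq_sum_eigenvalues.symm.trans htr

lemma purity_pos {ρ : Matrix n n 𝕜} (hρ : ρ.IsHermitian) (htr : ρ.trace = 1) :
    0 < purity ρ := by
  classical
  rw [purity_eq_sum_sq_eigenvalues hρ]
  exact sum_sq_pos_of_sum_eq_one (sum_eigenvalues_eq_one hρ htr)

open scoped ComplexOrder in
lemma neg_logb_purity_le_vNE {ρ : Matrix n n ℂ} (hρ : ρ.PosSemidef) (htr : ρ.trace = 1) :
    -Real.logb 2 (purity ρ) ≤ vNE ρ := by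
  classical
  rw [purity_eq_sum_sq_eigenvalues hρ.1, vNE, dif_pos hρ.1]
  exact neg_logb_sum_sq_le_shannon hρ.eigenvalues_nonneg (sum_eigenvalues_eq_one hρ.1 htr)

end Purity

section RegularEmbedding

variable {X Y : Type*} (P θ : X × Y → ℝ)

lemma norm_regEmb (q : X × Y) : ‖regEmb P θ q‖ = √(P q) := by
  rw [regEmb, norm_mul, mul_comm Complex.I, Complex.norm_exp_ofReal_mul_I, one_mul,
    Complex.norm_of_nonneg (Real.sqrt_nonneg _)]

variable [Fintype X]

/-- The Bhattacharyya coefficient of `P(·,y)` and `P(·,y')`, which is the entry `(y, y')` of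
`ρ_B` for the constant phase function `θ = 0`. -/
def bhattacharyya (y y' : Y) : ℝ := ∑ x, √(P (x, y)) * √(P (x, y'))

lemma norm_rhoB_le_bhattacharyya (y y' : Y) : ‖rhoB P θ y y'‖ ≤ bhattacharyya P y y' := by
  refine (norm_sum_le _ _).trans_eq (Finset.sum_congr rfl fun x _ => ?_)
  rw [norm_mul, norm_star, norm_regEmb, norm_regEmb]

open scoped ComplexOrder in
lemma posSemidef_rhoB [Finite Y] : (rhoB P θ).PosSemidef :=
  Matrix.posSemidef_self_mul_conjTranspose (Matrix.of fun y x => regEmb P θ (x, y))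

variable [Fintype Y]

variable {P} in
lemma trace_rhoB (hP : ∀ q, 0 ≤ P q) : (rhoB P θ).trace = ((∑ q, P q : ℝ) : ℂ) := by
  rw [Fintype.sum_prod_type_right]
  simp only [Matrix.trace, Matrix.diag, rhoB, Matrix.of_apply, Complex.ofReal_sum]
  refine Finset.sum_congr rfl fun y _ => Finset.sum_congr rfl fun x _ => ?_
  rw [Complex.star_def, Complex.mul_conj, Complex.normSq_eq_norm_sq, norm_regEmb,
    Real.sq_sqrt (hP _)]

lemma purity_rhoB_le : purity (rhoB P θ) ≤ ∑ y, ∑ y', bhattacharyya P y y' ^ 2 := by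
  rw [purity_eq_sum_norm_sq (posSemidef_rhoB P θ).1]
  gcongr with y _ y' _
  exact norm_rhoB_le_bhattacharyya P θ y y'

variable {P} in
theorem neg_logb_sum_bhattacharyya_sq_sub_mutualInfo_le_leakReg (hP : ∀ q, 0 ≤ P q)
    (hsum : ∑ q, P q = 1) :
    -Real.logb 2 (∑ y, ∑ y', bhattacharyya P y y' ^ 2) - mutualInfo P ≤ leakReg P θ := by
  have hρ := posSemidef_rhoB P θ
  have htr : (rhoB P θ).trace = 1 := by rw [trace_rhoB θ hP, hsum, Complex.ofReal_one]
  have hpurity := Real.logb_le_logb_of_le one_lt_two (purity_pos hρ.1 htr) (purity_rhoB_le P θ)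
  have hentropy := neg_logb_purity_le_vNE hρ htr
  rw [leakReg]
  linarith

end RegularEmbedding

section NoisyOT

lemma log_eight : Real.log 8 = 3 * Real.log 2 := by
  rw [show (8 : ℝ) = 2 ^ 3 by norm_num, Real.log_pow]
  norm_num

variable {p : ℝ}

lemma POTnoisy_nonneg (hp0 : 0 ≤ p) (hp1 : p ≤ 1) (q) : 0 ≤ POTnoisy p q := by
  unfold POTnoisy
  split_ifs <;> linarith

lemma sum_comp_POTnoisy (f : ℝ → ℝ) :
    ∑ q, f (POTnoisy p q) = 8 * f ((1 - p) / 8) + 8 * f (p / 8) := by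
  simp only [Fintype.sum_prod_type, Fintype.sum_bool, POTnoisy, if_true, Bool.false_eq_true,
    if_false, reduceCtorEq]
  ring

lemma margX_POTnoisy : margX (POTnoisy p) = fun _ => 1 / 4 := by
  ext ⟨_ | _, _ | _⟩ <;> simp [margX, POTnoisy, Fintype.sum_prod_type] <;> ring

lemma margY_POTnoisy : margY (POTnoisy p) = fun _ => 1 / 4 := by
  ext ⟨_ | _, _ | _⟩ <;> simp [margY, POTnoisy, Fintype.sum_prod_type] <;> ring

lemma shannon_POTnoisy : shannon (POTnoisy p) = 3 + Real.binEntropy p / Real.log 2 := by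
  have hlog8 : Real.negMulLog 8⁻¹ = 3 * Real.log 2 / 8 := by
    rw [Real.negMulLog, Real.log_inv, log_eight]
    ring
  have hlog2 : Real.log 2 ≠ 0 := (Real.log_pos one_lt_two).ne'
  rw [shannon_eq_sum_negMulLog_div, sum_comp_POTnoisy, div_eq_mul_inv (1 - p), div_eq_mul_inv p,
    Real.negMulLog_mul, Real.negMulLog_mul, hlog8,
    Real.binEntropy_eq_negMulLog_add_negMulLog_one_sub]
  field_simp
  ring

lemma mutualInfo_POTnoisy (hp0 : 0 ≤ p) (hp1 : p ≤ 1) :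
    mutualInfo (POTnoisy p) = 1 - Real.binEntropy p / Real.log 2 := by
  have huniform : shannon (fun _ : Bool × Bool => (1 / 4 : ℝ)) = 2 := by
    have h := shannon_uniform (α := Bool × Bool)
    norm_num at h
    rw [h, show (4 : ℝ) = 2 ^ 2 by norm_num, Real.logb_pow, Real.logb_self_eq_one one_lt_two]
    norm_num
  rw [mutualInfo_eq_shannon (POTnoisy_nonneg hp0 hp1), margX_POTnoisy, margY_POTnoisy,
    shannon_POTnoisy, huniform]
  ring

lemma bhattacharyya_POTnoisy (hp0 : 0 ≤ p) (hp1 : p ≤ 1) (c c' y y' : Bool) :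
    bhattacharyya (POTnoisy p) (c, y) (c', y') =
      if c = c' then if y = y' then 1 / 4 else √(p * (1 - p)) / 2
      else (1 + 2 * √(p * (1 - p))) / 8 := by
  have hcorrect : √((1 - p) / 8) * √((1 - p) / 8) = (1 - p) / 8 :=
    Real.mul_self_sqrt (by linarith)
  have hflipped : √(p / 8) * √(p / 8) = p / 8 := Real.mul_self_sqrt (by linarith)
  have hcross : √(p / 8) * √((1 - p) / 8) = √(p * (1 - p)) / 8 := by
    rw [← Real.sqrt_mul (by linarith), show p / 8 * ((1 - p) / 8) = p * (1 - p) / 8 ^ 2 by ring,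
      Real.sqrt_div' _ (by positivity), Real.sqrt_sq (by norm_num)]
  cases c <;> cases c' <;> cases y <;> cases y' <;>
    simp only [bhattacharyya, POTnoisy, Fintype.sum_prod_type, Fintype.sum_bool, if_true,
      Bool.false_eq_true, if_false, reduceCtorEq] <;>
    linarith

lemma sum_bhattacharyya_sq_POTnoisy (hp0 : 0 ≤ p) (hp1 : p ≤ 1) :
    ∑ y, ∑ y', bhattacharyya (POTnoisy p) y y' ^ 2 =
      3 / 8 + √(p * (1 - p)) / 2 + 3 / 2 * √(p * (1 - p)) ^ 2 := by
  simp only [Fintype.sum_prod_type, Fintype.sum_bool, bhattacharyya_POTnoisy hp0 hp1, if_true,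
    Bool.false_eq_true, if_false, reduceCtorEq]
  ring

lemma mul_le_binEntropy (hp0 : 0 ≤ p) (hp1 : p ≤ 1) :
    p * (2 + 3 * Real.log 2 - 9 * p) ≤ Real.binEntropy p := by
  -- The base points `1/8` and `1` are near `p` and `1 - p` for `p` close to `1/2 - 1/(2√2)`, where
  -- the final inequality is tightest.
  have hp := mul_le_negMulLog hp0 (b := 1 / 8) (by norm_num)
  have hq := mul_le_negMulLog (sub_nonneg.2 hp1) one_pos
  rw [Real.log_div one_ne_zero (by norm_num), Real.log_one, log_eight] at hp
  rw [Real.log_one] at hq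
  rw [Real.binEntropy_eq_negMulLog_add_negMulLog_one_sub]
  linarith

lemma sq_div_add_log_le_binEntropy (hp0 : 0 ≤ p) (hp1 : p ≤ 1 / 2 - 1 / (2 * √2)) :
    (1 / 2 - p - √(p * (1 - p))) ^ 2 / 32 +
        Real.log (2 * (3 / 8 + √(p * (1 - p)) / 2 + 3 / 2 * √(p * (1 - p)) ^ 2)) ≤
      Real.binEntropy p := by
  have hsqrt_lower : 1.414 < √2 := Real.lt_sqrt_of_sq_lt (by norm_num)
  have hsqrt_upper : √2 < 1.415 := (Real.sqrt_lt' (by norm_num)).2 (by norm_num)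
  have hr_lower : 0.7067 < 1 / √2 := by rw [lt_div_iff₀ (by positivity)]; linarith
  have hr_upper : 1 / √2 < 0.7073 := by rw [div_lt_iff₀ (by positivity)]; linarith
  have hp : p ≤ 0.1467 := by
    rw [mul_comm, ← div_div] at hp1
    linarith
  set s := √(p * (1 - p))
  have hs0 : 0 ≤ s := Real.sqrt_nonneg _
  have hs : s ^ 2 = p * (1 - p) := Real.sq_sqrt (mul_nonneg hp0 (by linarith))
  -- AM-GM for `s²` and `(3/10)²`.
  have hs_le : s ≤ 5 / 3 * s ^ 2 + 3 / 20 := by nlinarith [sq_nonneg (s - 3 / 10)]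
  have hd : (1 / 2 - p - s) ^ 2 ≤ (1 / 2 - p) ^ 2 := by
    have hs_le_two_mul : s ≤ 2 * (1 / 2 - p) := by nlinarith
    exact sq_le_sq' (by linarith) (by linarith)
  set x := 2 * (3 / 8 + s / 2 + 3 / 2 * s ^ 2) with hx
  have hx0 : 0 < x := by positivity
  -- At the right end of the range `x` is about `1.479`; `√2` is close and has an easy logarithm.
  have hlog : Real.log x ≤ 0.7073 * x - 1 + Real.log 2 / 2 := by
    have htangent := log_le_div_sub_one_add_log hx0 (b := √2) (by positivity)
    rw [Real.log_sqrt zero_le_two, ← one_div_mul_eq_div] at htangent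
    linarith [mul_le_mul_of_nonneg_right hr_upper.le hx0.le]
  have hquadratic : 5.731 * p ^ 2 ≤ 0.809 * p + 0.009 := by
    nlinarith [mul_nonneg hp0 (sub_nonneg.2 hp)]
  refine le_trans ?_ (mul_le_binEntropy hp0 (by linarith))
  linarith [Real.log_two_lt_d9, mul_le_mul_of_nonneg_left Real.log_two_gt_d9.le hp0]

end NoisyOT

/-- **Leakage of noisy 1-out-of-2 OT.** For `0 ≤ p < 1/2 − 1/(2√2)`, every
regular embedding `ψ_θ` of `P^{OT,p}` satisfies
`Δ(ψ_θ) ≥ (1/2 − p − √(p(1−p)))² / (32·ln 2)`. -/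
theorem leakage_POTnoisy (p : ℝ) (hp0 : 0 ≤ p)
    (hp1 : p < 1 / 2 - 1 / (2 * Real.sqrt 2))
    (θ : (Bool × Bool) × (Bool × Bool) → ℝ) :
    (1 / 2 - p - Real.sqrt (p * (1 - p))) ^ 2 / (32 * Real.log 2) ≤
      leakReg (POTnoisy p) θ := by
  have hp : p ≤ 1 := by linarith [show 0 < 1 / (2 * √2) by positivity]
  have hsum : ∑ q, POTnoisy p q = 1 := by
    linarith [sum_comp_POTnoisy (p := p) fun t => t]
  set Q := 3 / 8 + √(p * (1 - p)) / 2 + 3 / 2 * √(p * (1 - p)) ^ 2 with hQ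
  have hleak : -Real.logb 2 Q - (1 - Real.binEntropy p / Real.log 2) ≤ leakReg (POTnoisy p) θ := by
    rw [hQ, ← sum_bhattacharyya_sq_POTnoisy hp0 hp, ← mutualInfo_POTnoisy hp0 hp]
    exact neg_logb_sum_bhattacharyya_sq_sub_mutualInfo_le_leakReg θ (POTnoisy_nonneg hp0 hp) hsum
  have hreal := sq_div_add_log_le_binEntropy hp0 hp1.le
  rw [← hQ, Real.log_mul two_ne_zero (by positivity)] at hreal
  have hlog2 : 0 < Real.log 2 := Real.log_pos one_lt_two
  refine le_trans ?_ hleak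
  rw [← div_div, div_le_iff₀ hlog2, Real.logb]
  field_simp
  linarith
end
end
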